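/- Let a, b be distinct square-free integers not equal to 0 or 1 with 𝓕_{4,a}(a,b) ≠ ∅. Then |T_a(a,b;X)| ≫_{a,b} X^{1/2} as X → ∞; consequently |𝓕_{4,a}(a,b;X)| ≫_{a,b} X^{1/2}. -/

import Mathlib

/-!
The fields `K_[m] = ℚ(t)`, `t² = m(g₀ + h₀√a)`, are shown to be pairwise distinct members of
`𝓕_{4,a}(a,b;X)` as `m` runs through `M_a(a,b;X)`, and `M_a(a,b;X)` is counted by a sieve.

Put `t' = n₀m√b / t`, a square root of the conjugate `m(g₀ - h₀√a)`; this is where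
`g₀² - h₀²a = n₀²b` enters. Since none of `√a`, `√b`, `√(ab)` is rational, there are automorphisms
`R : t ↦ t' ↦ -t` and `S : t ↦ t, t' ↦ -t'` of the algebraic closure (`Rad.exists_frame`), and every
automorphism acts on `ℚ(t, √b)` as some `R^i` or `S R^i` (`Frame.word`). Hence `ℚ(t, √b)` is the
Galois closure of `ℚ(t)`, with the dihedral group of order eight as Galois group. A quadratic
subfield is generated by a square root of a rational number, on which `R` and `S` act by signs, so
it is one of `ℚ(√a)`, `ℚ(√b)`, `ℚ(√(ab))`. A quartic `D₄` subfield of the Galois closure is fixed by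
some reflection `S R^i`, which moves `√(ab)`; the last quadratic field is thus not an extended
quadratic field. The mirror field `ℚ(t + t')` contains `√b`. This gives `Frame.mem_F4a`.

The discriminant of `K_[m]` divides that of the integral family `1, √a, t, t√a`, which is
`256 a² (n₀m)² b` (`Frame.absDisc_le`), so `m ∈ M_a(a,b;X)` forces it to be at most `X`. If
`K_[m] = K_[m']`, then `√(mm')` is rational or a rational multiple of `√a`, whence `m = m'`
(`injective_aux`). Finally, among the integers `1 + |ab|k` a positive proportion is square-free
(`count_squarefree`), and `𝓕_{4,a}(a,b;X)` is finite by Hermite's theorem, so that cardinalities may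
be compared by inclusion.
-/

open IntermediateField

noncomputable section

abbrev Qbar : Type := AlgebraicClosure ℚ

noncomputable def galCl (K : IntermediateField ℚ Qbar) : IntermediateField ℚ Qbar :=
  normalClosure ℚ K Qbar

def IsD4Quartic (K : IntermediateField ℚ Qbar) : Prop :=
  Module.finrank ℚ K = 4 ∧
    Nonempty ((galCl K ≃ₐ[ℚ] galCl K) ≃* DihedralGroup 4)

open scoped Classical in
noncomputable def absDisc (K : IntermediateField ℚ Qbar) : ℕ :=
  if h : FiniteDimensional ℚ K then
    haveI := h
    haveI : NumberField K := ⟨⟩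
    (NumberField.discr K).natAbs
  else 0

def F4 (Q : IntermediateField ℚ Qbar) : Set (IntermediateField ℚ Qbar) :=
  {K | IsD4Quartic K ∧ Q ≤ galCl K}

def F4X (Q : IntermediateField ℚ Qbar) (X : ℝ) : Set (IntermediateField ℚ Qbar) :=
  {K | K ∈ F4 Q ∧ (absDisc K : ℝ) ≤ X}

noncomputable def torsionCount (K : IntermediateField ℚ Qbar) (ℓ : ℕ) : ℕ :=
  Nat.card {x : ClassGroup (NumberField.RingOfIntegers K) // x ^ ℓ = 1}

/-- `F` is an extended quadratic field of the `D₄`-quartic field `K`: a quadratic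
subfield of the Galois closure `K̃` which occurs as the (unique) quadratic subfield of
some `D₄`-quartic field contained in `K̃`. -/
def ExtendedQuadratic (K F : IntermediateField ℚ Qbar) : Prop :=
  F ≤ galCl K ∧ Module.finrank ℚ F = 2 ∧
    ∃ K' : IntermediateField ℚ Qbar, IsD4Quartic K' ∧ K' ≤ galCl K ∧ F ≤ K'

/-- The family `𝓕₄(a,b)` (for fixed square roots `sa` of `a` and `sb` of `b`): the
`D₄`-quartic fields whose Galois closure contains `ℚ(√a,√b)` and whose extended
quadratic fields are exactly `ℚ(√a)` and `ℚ(√b)`. -/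
def F4ab (sa sb : Qbar) : Set (IntermediateField ℚ Qbar) :=
  {K | IsD4Quartic K ∧ adjoin ℚ {sa, sb} ≤ galCl K ∧
    ∀ F : IntermediateField ℚ Qbar,
      ExtendedQuadratic K F ↔ (F = adjoin ℚ {sa} ∨ F = adjoin ℚ {sb})}

/-- The subfamily `𝓕_{4,a}(a,b)`: fields in `𝓕₄(a,b)` whose unique quadratic subfield
is `ℚ(√a)`. -/
def F4a (sa sb : Qbar) : Set (IntermediateField ℚ Qbar) :=
  {K | K ∈ F4ab sa sb ∧ adjoin ℚ {sa} ≤ K ∧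
    ∀ F : IntermediateField ℚ Qbar,
      F ≤ K → Module.finrank ℚ F = 2 → F = adjoin ℚ {sa}}

/-- The set `M_a(a,b;X)` of square-free positive integers `m` coprime to `|ab|` with
`m ≤ X^{1/2} / (16 n₀ √(|a|³|b|³))`. -/
def Mset (a b n₀ : ℤ) (X : ℝ) : Set ℕ :=
  {m : ℕ | Squarefree m ∧ 0 < m ∧ Nat.Coprime m (a * b).natAbs ∧
    (m : ℝ) ≤ Real.sqrt X /
      (16 * (n₀ : ℝ) * Real.sqrt ((a.natAbs : ℝ) ^ 3 * (b.natAbs : ℝ) ^ 3))}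

/-- The set `T_a(a,b;X) = {K_[m] = ℚ(√(g₀m + h₀m√a)) : m ∈ M_a(a,b;X)}`. -/
def Tset (sa : Qbar) (a b g₀ h₀ n₀ : ℤ) (X : ℝ) : Set (IntermediateField ℚ Qbar) :=
  {K | ∃ m ∈ Mset a b n₀ X, ∃ t : Qbar,
    t ^ 2 = ((g₀ * m : ℤ) : Qbar) + ((h₀ * m : ℤ) : Qbar) * sa ∧ K = adjoin ℚ {t}}


/-! ### Automorphisms of the algebraic closure -/

local notation "Γ" => Gal(Qbar/ℚ)

-- The structure of `ℚ`-algebra found on `Qbar` is the one every field of characteristic zero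
-- carries; it equals the one coming from the construction of the algebraic closure.
instance : IsGalois ℚ Qbar := by
  have e : (DivisionRing.toRatAlgebra : Algebra ℚ Qbar) = AlgebraicClosure.instAlgebra ℚ :=
    Subsingleton.elim _ _
  rw [e]
  infer_instance

-- Subfields of `Qbar` are given the algebra structure for which the library on intermediate fields
-- is written; it is definitionally equal to the one instance search finds otherwise.
local instance subfieldAlgebra (K : IntermediateField ℚ Qbar) : Algebra ℚ K := K.algebra'

lemma exists_moved {x : Qbar} (hx : x ∉ (⊥ : IntermediateField ℚ Qbar)) : ∃ σ : Γ, σ x ≠ x := by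
  by_contra! h
  exact hx ((InfiniteGalois.mem_bot_iff_fixed x).2 h)

lemma mem_of_fixed {L : IntermediateField ℚ Qbar} {x : Qbar}
    (h : ∀ σ : Γ, (∀ y ∈ L, σ y = y) → σ x = x) : x ∈ L := by
  rw [← InfiniteGalois.fixedField_fixingSubgroup L, IntermediateField.mem_fixedField_iff]
  intro σ hσ
  exact h σ ((IntermediateField.mem_fixingSubgroup_iff _ _).1 hσ)

lemma agree_adjoin {S : Set Qbar} {σ τ : Γ} (h : ∀ x ∈ S, σ x = τ x) {x : Qbar}
    (hx : x ∈ adjoin ℚ S) : σ x = τ x := by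
  induction hx using IntermediateField.adjoin_induction with
  | mem x hx => exact h x hx
  | algebraMap x => simp
  | add x y _ _ hx hy => simp [hx, hy]
  | inv x _ hx => simp [hx]
  | mul x y _ _ hx hy => simp [hx, hy]

lemma int_mem (L : IntermediateField ℚ Qbar) (k : ℤ) : (k : Qbar) ∈ L := intCast_mem L k

lemma sign_of_sq {x : Qbar} {σ : Γ} (h : σ (x ^ 2) = x ^ 2) : σ x = x ∨ σ x = -x := by
  rw [map_pow] at h
  exact sq_eq_sq_iff_eq_or_eq_neg.1 h

/-- The data of a radical `D₄` extension: conjugate square roots `t, t'` of `g ± h√a` whose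
product is `n√b`, where none of `√a`, `√b`, `√(ab)` is rational. The field `ℚ(t)` is quartic with
quadratic subfield `ℚ(√a)`, and `ℚ(t, √b)` is its Galois closure. -/
structure Rad (a b g h n : ℤ) (sa sb t t' : Qbar) : Prop where
  hsa : sa ^ 2 = (a : Qbar)
  hsb : sb ^ 2 = (b : Qbar)
  ht : t ^ 2 = (g : Qbar) + (h : Qbar) * sa
  ht' : t' ^ 2 = (g : Qbar) - (h : Qbar) * sa
  htt : t * t' = (n : Qbar) * sb
  h0 : h ≠ 0
  n0 : n ≠ 0
  ia : sa ∉ (⊥ : IntermediateField ℚ Qbar)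
  ib : sb ∉ (⊥ : IntermediateField ℚ Qbar)
  iab : sa * sb ∉ (⊥ : IntermediateField ℚ Qbar)

namespace Rad

variable {a b g h n : ℤ} {sa sb t t' : Qbar}

/-- The mirror field `ℚ(t + t')` has the same shape with `a` and `b` exchanged, because
`(t ± t')² = 2g ± 2n√b` and `(t + t')(t - t') = 2h√a`. -/
lemma swap (d : Rad a b g h n sa sb t t') :
    Rad b a (2 * g) (2 * n) (2 * h) sb sa (t + t') (t - t') where
  hsa := d.hsb
  hsb := d.hsa
  ht := by push_cast; linear_combination d.ht + d.ht' + 2 * d.htt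
  ht' := by push_cast; linear_combination d.ht + d.ht' - 2 * d.htt
  htt := by push_cast; linear_combination d.ht - d.ht'
  h0 := by have := d.n0; omega
  n0 := by have := d.h0; omega
  ia := d.ib
  ib := d.ia
  iab := by rw [mul_comm]; exact d.iab

lemma sa_ne (d : Rad a b g h n sa sb t t') : sa ≠ 0 := fun e => d.ia (e ▸ zero_mem _)
lemma sb_ne (d : Rad a b g h n sa sb t t') : sb ≠ 0 := fun e => d.ib (e ▸ zero_mem _)
lemma h_ne (d : Rad a b g h n sa sb t t') : (h : Qbar) ≠ 0 := Int.cast_ne_zero.2 d.h0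
lemma n_ne (d : Rad a b g h n sa sb t t') : (n : Qbar) ≠ 0 := Int.cast_ne_zero.2 d.n0
lemma t_ne (d : Rad a b g h n sa sb t t') : t ≠ 0 := fun e => by
  have := d.htt
  rw [e, zero_mul] at this
  exact mul_ne_zero d.n_ne d.sb_ne this.symm
lemma t'_ne (d : Rad a b g h n sa sb t t') : t' ≠ 0 := fun e => by
  have := d.htt
  rw [e, mul_zero] at this
  exact mul_ne_zero d.n_ne d.sb_ne this.symm

lemma t'_eq (d : Rad a b g h n sa sb t t') : t' = n * sb / t := by
  rw [eq_div_iff d.t_ne, mul_comm]; exact d.htt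

lemma sa_eq (d : Rad a b g h n sa sb t t') : sa = (t ^ 2 - g) / h := by
  rw [eq_div_iff d.h_ne]; linear_combination -d.ht

lemma t_sq_ne (d : Rad a b g h n sa sb t t') : t ^ 2 ≠ t' ^ 2 := fun e => by
  rw [d.ht, d.ht'] at e
  have : (h : Qbar) * sa = 0 := by linear_combination e / 2
  exact mul_ne_zero d.h_ne d.sa_ne this

lemma t_ne_t' (d : Rad a b g h n sa sb t t') : t ≠ t' := fun e => d.t_sq_ne (by rw [e])
lemma t_ne_neg (d : Rad a b g h n sa sb t t') : t ≠ -t' := fun e => d.t_sq_ne (by rw [e]; ring)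

lemma sa_cases (d : Rad a b g h n sa sb t t') (σ : Γ) : σ sa = sa ∨ σ sa = -sa :=
  sign_of_sq (by rw [d.hsa]; simp)

lemma sb_cases (d : Rad a b g h n sa sb t t') (σ : Γ) : σ sb = sb ∨ σ sb = -sb :=
  sign_of_sq (by rw [d.hsb]; simp)

lemma t_of_pos (d : Rad a b g h n sa sb t t') {σ : Γ} (hσ : σ sa = sa) : σ t = t ∨ σ t = -t :=
  sign_of_sq (by rw [d.ht]; simp [hσ])

lemma t_of_neg (d : Rad a b g h n sa sb t t') {σ : Γ} (hσ : σ sa = -sa) :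
    σ t = t' ∨ σ t = -t' := by
  apply sq_eq_sq_iff_eq_or_eq_neg.1
  rw [← map_pow, d.ht, d.ht']
  simp [hσ, sub_eq_add_neg]

lemma t'_map (d : Rad a b g h n sa sb t t') (σ : Γ) : σ t' = n * σ sb / σ t := by
  conv_lhs => rw [d.t'_eq]
  simp

lemma sa_map (d : Rad a b g h n sa sb t t') (σ : Γ) : σ sa = ((σ t) ^ 2 - g) / h := by
  conv_lhs => rw [d.sa_eq]
  simp

lemma sa_of_t' (d : Rad a b g h n sa sb t t') {σ : Γ} (hσ : σ t = t' ∨ σ t = -t') :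
    σ sa = -sa := by
  rw [d.sa_map, div_eq_iff d.h_ne]
  rcases hσ with e | e <;> rw [e] <;> linear_combination d.ht'

lemma sa_of_t (d : Rad a b g h n sa sb t t') {σ : Γ} (hσ : σ t = t ∨ σ t = -t) :
    σ sa = sa := by
  rw [d.sa_map, div_eq_iff d.h_ne]
  rcases hσ with e | e <;> rw [e] <;> linear_combination d.ht

/-- An automorphism moving `√b` alone; it comes from composing automorphisms which move `√b` and
`√(ab)`. -/
lemma exists_pos_neg (d : Rad a b g h n sa sb t t') : ∃ σ : Γ, σ sa = sa ∧ σ sb = -sb := by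
  obtain ⟨σ, hσ⟩ := exists_moved d.ib
  have hb := (d.sb_cases σ).resolve_left hσ
  rcases d.sa_cases σ with h1 | h1
  · exact ⟨σ, h1, hb⟩
  obtain ⟨τ, hτ⟩ := exists_moved d.iab
  rw [map_mul] at hτ
  rcases d.sa_cases τ with h2 | h2 <;> rcases d.sb_cases τ with h3 | h3
  · simp [h2, h3] at hτ
  · exact ⟨τ, h2, h3⟩
  · exact ⟨σ * τ, by simp [h1, h2], by simp [hb, h3]⟩
  · simp [h2, h3] at hτ

/-- The reflection of the dihedral group which fixes `t`. -/
lemma exists_S (d : Rad a b g h n sa sb t t') : ∃ S : Γ, S t = t ∧ S sb = -sb := by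
  obtain ⟨σ, h1, h2⟩ := d.exists_pos_neg
  rcases d.t_of_pos h1 with h3 | h3
  · exact ⟨σ, h3, h2⟩
  -- Otherwise `σ` fixes `t'`, and a conjugate of `σ` fixes `t`.
  have h4 : σ t' = t' := by
    rw [d.t'_map, h2, h3, div_eq_iff (neg_ne_zero.2 d.t_ne)]
    linear_combination d.htt
  obtain ⟨ρ, hρ⟩ := exists_moved d.ia
  have h5 : σ (ρ t) = ρ t := by
    rcases d.t_of_neg ((d.sa_cases ρ).resolve_left hρ) with e | e <;> simp [e, h4]
  refine ⟨ρ⁻¹ * σ * ρ, ?_, ?_⟩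
  · simp only [AlgEquiv.mul_apply, h5]
    rw [← AlgEquiv.mul_apply]; simp
  · have : σ (ρ sb) = - ρ sb := by
      rcases d.sb_cases ρ with e | e <;> simp [e, h2]
    simp only [AlgEquiv.mul_apply, this, map_neg]
    rw [← AlgEquiv.mul_apply]; simp

/-- The rotation of the dihedral group. -/
lemma exists_R (d : Rad a b g h n sa sb t t') : ∃ R : Γ, R t = t' ∧ R sb = -sb := by
  obtain ⟨S, hS1, hS2⟩ := d.exists_S
  obtain ⟨ρ, hρ⟩ := exists_moved d.ia
  have h1 := (d.sa_cases ρ).resolve_left hρ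
  obtain ⟨σ, h2, h3⟩ : ∃ σ : Γ, (σ t = t' ∨ σ t = -t') ∧ σ sb = -sb := by
    rcases d.sb_cases ρ with e | e
    · exact ⟨ρ * S, by simpa [hS1] using d.t_of_neg h1, by simp [hS2, e]⟩
    · exact ⟨ρ, d.t_of_neg h1, e⟩
  rcases h2 with e | e
  · exact ⟨σ, e, h3⟩
  · have h4 : σ t' = t := by
      rw [d.t'_map, h3, e, div_eq_iff (neg_ne_zero.2 d.t'_ne)]
      linear_combination d.htt
    exact ⟨σ * σ * σ, by simp [e, h4], by simp [h3]⟩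

end Rad

/-- A choice of automorphisms `R`, `S` of the algebraic closure which act on `t, t', √a, √b` as the
rotation and the reflection generating the dihedral group. -/
structure Frame (a b g h n : ℤ) (sa sb t t' : Qbar) (R S : Gal(Qbar/ℚ)) : Prop
    extends Rad a b g h n sa sb t t' where
  Rt : R t = t'
  Rt' : R t' = -t
  Rsa : R sa = -sa
  Rsb : R sb = -sb
  St : S t = t
  St' : S t' = -t'
  Ssa : S sa = sa
  Ssb : S sb = -sb

lemma Rad.exists_frame {a b g h n : ℤ} {sa sb t t' : Qbar} (d : Rad a b g h n sa sb t t') :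
    ∃ R S, Frame a b g h n sa sb t t' R S := by
  obtain ⟨S, hS1, hS2⟩ := d.exists_S
  obtain ⟨R, hR1, hR2⟩ := d.exists_R
  refine ⟨R, S, { d with
    Rt := hR1, Rsb := hR2, St := hS1, Ssb := hS2, Ssa := d.sa_of_t (.inl hS1),
    Rsa := d.sa_of_t' (.inl hR1), Rt' := ?_, St' := ?_ }⟩
  · rw [d.t'_map, hR1, hR2, div_eq_iff d.t'_ne]; linear_combination d.htt
  · rw [d.t'_map, hS1, hS2, div_eq_iff d.t_ne]; linear_combination d.htt

namespace Frame

variable {a b g h n : ℤ} {sa sb t t' : Qbar} {R S : Gal(Qbar/ℚ)}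

lemma cases (d : Frame a b g h n sa sb t t' R S) (σ : Γ) :
    (σ t = t ∧ σ sb = sb) ∨ (σ t = t' ∧ σ sb = -sb) ∨ (σ t = -t ∧ σ sb = sb) ∨
    (σ t = -t' ∧ σ sb = -sb) ∨ (σ t = t ∧ σ sb = -sb) ∨ (σ t = t' ∧ σ sb = sb) ∨
    (σ t = -t ∧ σ sb = -sb) ∨ (σ t = -t' ∧ σ sb = sb) := by
  have h1 := d.sb_cases σ
  have h2 : (σ t = t ∨ σ t = -t) ∨ (σ t = t' ∨ σ t = -t') :=
    (d.sa_cases σ).imp d.t_of_pos d.t_of_neg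
  tauto

/-- Every automorphism acts on the Galois closure as one of the eight words `Rⁱ`, `S Rⁱ`. -/
lemma word (d : Frame a b g h n sa sb t t' R S) (σ : Γ) :
    ∃ i : Fin 4, (∀ x ∈ adjoin ℚ {t, sb}, σ x = (R ^ (i : ℕ)) x) ∨
      (∀ x ∈ adjoin ℚ {t, sb}, σ x = (S * R ^ (i : ℕ)) x) := by
  have key : ∀ τ : Γ, σ t = τ t → σ sb = τ sb → ∀ x ∈ adjoin ℚ {t, sb}, σ x = τ x := by
    intro τ h1 h2 x hx
    refine agree_adjoin ?_ hx
    rintro y (rfl | rfl)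
    exacts [h1, h2]
  rcases d.cases σ with e | e | e | e | e | e | e | e
  · exact ⟨0, .inl <| key _ (by simp [e]) (by simp [e])⟩
  · exact ⟨1, .inl <| key _ (by simp [e, d.Rt]) (by simp [e, d.Rsb])⟩
  · exact ⟨2, .inl <| key _ (by simp [e, pow_succ, d.Rt, d.Rt']) (by simp [e, pow_succ, d.Rsb])⟩
  · exact ⟨3, .inl <| key _ (by simp [e, pow_succ, d.Rt, d.Rt']) (by simp [e, pow_succ, d.Rsb])⟩
  · exact ⟨0, .inr <| key _ (by simp [e, d.St]) (by simp [e, d.Ssb])⟩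
  · exact ⟨3, .inr <| key _ (by simp [e, pow_succ, d.Rt, d.Rt', d.St'])
      (by simp [e, pow_succ, d.Rsb, d.Ssb])⟩
  · exact ⟨2, .inr <| key _ (by simp [e, pow_succ, d.Rt, d.Rt', d.St])
      (by simp [e, pow_succ, d.Rsb, d.Ssb])⟩
  · exact ⟨1, .inr <| key _ (by simp [e, d.Rt, d.St']) (by simp [e, d.Rsb, d.Ssb])⟩

lemma pow_fix {x : Qbar} (hR : R x = x) (i : ℕ) : (R ^ i) x = x := by
  induction i with
  | zero => simp
  | succ k ih => rw [pow_succ, AlgEquiv.mul_apply, hR, ih]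

lemma mem_bot (d : Frame a b g h n sa sb t t' R S) {x : Qbar} (hx : x ∈ adjoin ℚ {t, sb})
    (hR : R x = x) (hS : S x = x) : x ∈ (⊥ : IntermediateField ℚ Qbar) := by
  refine (InfiniteGalois.mem_bot_iff_fixed x).2 fun σ => ?_
  obtain ⟨i, e | e⟩ := d.word σ
  · rw [e x hx, pow_fix hR]
  · rw [e x hx, AlgEquiv.mul_apply, pow_fix hR, hS]

lemma t_mem : t ∈ adjoin ℚ {t, sb} := subset_adjoin _ _ (by simp)
lemma sb_mem : sb ∈ adjoin ℚ {t, sb} := subset_adjoin _ _ (by simp)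
lemma sa_mem' (d : Frame a b g h n sa sb t t' R S) : sa ∈ adjoin ℚ {t} := by
  rw [d.sa_eq]
  exact div_mem (sub_mem (pow_mem (mem_adjoin_simple_self ℚ t) 2) (int_mem _ _)) (int_mem _ _)
lemma adjoin_le : adjoin ℚ {t} ≤ adjoin ℚ {t, sb} := adjoin.mono _ _ _ (by simp)
lemma sa_mem (d : Frame a b g h n sa sb t t' R S) : sa ∈ adjoin ℚ {t, sb} := adjoin_le d.sa_mem'
lemma t'_mem (d : Frame a b g h n sa sb t t' R S) : t' ∈ adjoin ℚ {t, sb} := by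
  rw [d.t'_eq]
  exact div_mem (mul_mem (int_mem _ _) sb_mem) t_mem

lemma normal_N (d : Frame a b g h n sa sb t t' R S) : Normal ℚ (adjoin ℚ {t, sb}) := by
  rw [normal_iff_forall_map_le']
  intro σ
  rw [adjoin_map, adjoin_le_iff]
  rintro _ ⟨x, rfl | rfl, rfl⟩
  · rcases d.cases σ with e | e | e | e | e | e | e | e <;>
      simp [e, t_mem, d.t'_mem]
  · rcases d.sb_cases σ with e | e <;> simp [e, sb_mem]

/-- The Galois closure of `ℚ(t)` is `ℚ(t, √b)`. -/
lemma galCl_eq (d : Frame a b g h n sa sb t t' R S) :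
    galCl (adjoin ℚ {t}) = adjoin ℚ {t, sb} := by
  have := d.normal_N
  have e : galCl (adjoin ℚ {t}) = ⨆ f : Γ, (adjoin ℚ {t}).map (f : Qbar →ₐ[ℚ] Qbar) :=
    normalClosure_def'' _
  apply le_antisymm
  · exact normalClosure_le_iff_of_normal.2 adjoin_le
  · have h1 : t ∈ galCl (adjoin ℚ {t}) := le_normalClosure _ (mem_adjoin_simple_self ℚ t)
    have h2 : t' ∈ galCl (adjoin ℚ {t}) := by
      rw [e]
      refine le_iSup (fun f : Γ => (adjoin ℚ {t}).map (f : Qbar →ₐ[ℚ] Qbar)) R ?_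
      exact ⟨t, mem_adjoin_simple_self ℚ t, d.Rt⟩
    rw [adjoin_le_iff]
    rintro x (rfl | rfl)
    · exact h1
    · have : x = t * t' / n := by rw [eq_div_iff d.n_ne]; linear_combination -d.htt
      rw [this]
      exact div_mem (mul_mem h1 h2) (int_mem _ _)

end Frame

/-! ### The dihedral group -/

/-- The homomorphism from the dihedral group of order eight defined by two elements which satisfy
its relations. -/
def dihedralLift {G : Type*} [Group G] (r s : G) (hr : r ^ 4 = 1) (hs : s * s = 1)
    (hsr : r * s = s * r ^ 3) : DihedralGroup 4 →* G where
  toFun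
    | .r i => r ^ i.val
    | .sr i => s * r ^ i.val
  map_one' := by
    change r ^ (ZMod.val (0 : ZMod 4)) = 1
    simp
  map_mul' := by
    have hmod : ∀ k : ℕ, r ^ k = r ^ (k % 4) := fun k => by
      conv_lhs => rw [← Nat.mod_add_div k 4, pow_add, pow_mul, hr, one_pow, mul_one]
    have hcomm : ∀ k : ℕ, r ^ k * s = s * r ^ (3 * k) := by
      intro k
      induction k with
      | zero => simp
      | succ k ih => rw [pow_succ, mul_assoc, hsr, ← mul_assoc, ih, mul_assoc, ← pow_add]; ring_nf
    have hsub : ∀ i j : ZMod 4, (j - i).val = (3 * i.val + j.val) % 4 := by decide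
    rintro (i | i) (j | j)
    · simp only [DihedralGroup.r_mul_r, ZMod.val_add]
      rw [← hmod, pow_add]
    · simp only [DihedralGroup.r_mul_sr, hsub]
      rw [← hmod, ← mul_assoc, hcomm, mul_assoc, ← pow_add]
    · simp only [DihedralGroup.sr_mul_r, ZMod.val_add]
      rw [← hmod, pow_add, mul_assoc]
    · simp only [DihedralGroup.sr_mul_sr, hsub]
      rw [← hmod, mul_assoc, ← mul_assoc (r ^ i.val), hcomm, mul_assoc, ← pow_add, ← mul_assoc, hs,
        one_mul]

lemma finDim_adjoin {S : Set Qbar} [Finite S] : FiniteDimensional ℚ (adjoin ℚ S) :=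
  finiteDimensional_adjoin fun x _ => (Algebra.IsIntegral.isIntegral x)

namespace Frame

variable {a b g h n : ℤ} {sa sb t t' : Qbar} {R S : Gal(Qbar/ℚ)}

lemma nonempty_iso (d : Frame a b g h n sa sb t t' R S) :
    Nonempty (Gal(adjoin ℚ {t, sb}/ℚ) ≃* DihedralGroup 4) := by
  have := d.normal_N
  set N := adjoin ℚ {t, sb} with hN
  let ρ : Γ →* Gal(N/ℚ) := AlgEquiv.restrictNormalHom N
  have key : ∀ σ τ : Γ, σ t = τ t → σ sb = τ sb → ρ σ = ρ τ := by
    intro σ τ h1 h2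
    ext x
    rw [AlgEquiv.restrictNormalHom_apply, AlgEquiv.restrictNormalHom_apply]
    refine agree_adjoin ?_ x.2
    rintro y (rfl | rfl)
    exacts [h1, h2]
  have hr : ρ R ^ 4 = 1 := by
    rw [← map_pow, ← map_one ρ]
    exact key _ _ (by simp [pow_succ, d.Rt, d.Rt']) (by simp [pow_succ, d.Rsb])
  have hs : ρ S * ρ S = 1 := by
    rw [← map_mul, ← map_one ρ]
    exact key _ _ (by simp [d.St]) (by simp [d.Ssb])
  have hsr : ρ R * ρ S = ρ S * ρ R ^ 3 := by
    rw [← map_pow, ← map_mul, ← map_mul]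
    exact key _ _ (by simp [pow_succ, d.St, d.St', d.Rt, d.Rt'])
      (by simp [pow_succ, d.Ssb, d.Rsb])
  let f := dihedralLift (ρ R) (ρ S) hr hs hsr
  refine ⟨(MulEquiv.ofBijective f ⟨?_, ?_⟩).symm⟩
  · rw [injective_iff_map_eq_one]
    have ev : ∀ σ : Γ, ρ σ = 1 → σ t = t ∧ σ sb = sb := by
      intro σ hσ
      refine ⟨?_, ?_⟩
      · rw [← AlgEquiv.restrictNormalHom_apply N σ ⟨t, t_mem⟩]
        exact congrArg (fun τ : Gal(N/ℚ) => ((τ ⟨t, t_mem⟩ : N) : Qbar)) hσ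
      · rw [← AlgEquiv.restrictNormalHom_apply N σ ⟨sb, sb_mem⟩]
        exact congrArg (fun τ : Gal(N/ℚ) => ((τ ⟨sb, sb_mem⟩ : N) : Qbar)) hσ
    have n1 := d.t_ne_t'
    have n2 := d.t_ne_neg
    have n3 := self_ne_neg.2 d.t_ne
    have n4 := self_ne_neg.2 d.sb_ne
    rintro (i | i) hi
    · have hi' : ρ (R ^ i.val) = 1 := by rw [map_pow]; exact hi
      have := ev _ hi'
      fin_cases i
      · rfl
      · exact absurd this.1.symm (by simpa [ZMod.val, d.Rt] using n1)
      · exact absurd this.1.symm (by simpa [pow_succ, ZMod.val, d.Rt, d.Rt'] using n3)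
      · exact absurd this.1.symm (by simpa [pow_succ, ZMod.val, d.Rt, d.Rt'] using n2)
    · have hi' : ρ (S * R ^ i.val) = 1 := by rw [map_mul, map_pow]; exact hi
      have := ev _ hi'
      fin_cases i
      · exact absurd this.2.symm (by simpa [ZMod.val, d.Ssb] using n4)
      · exact absurd this.1.symm (by simpa [ZMod.val, d.Rt, d.St'] using n2)
      · exact absurd this.1.symm (by simpa [pow_succ, ZMod.val, d.Rt, d.Rt', d.St] using n3)
      · exact absurd this.1.symm (by simpa [pow_succ, ZMod.val, d.Rt, d.Rt', d.St'] using n1)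
  · intro σ
    obtain ⟨σ, rfl⟩ := AlgEquiv.restrictNormalHom_surjective Qbar σ
    have val : ∀ i : Fin 4, ZMod.val (n := 4) i = (i : ℕ) := fun _ => rfl
    obtain ⟨i, e | e⟩ := d.word σ
    · refine ⟨.r (i : Fin 4), ?_⟩
      have : ρ σ = ρ (R ^ (i : ℕ)) := key _ _ (e t t_mem) (e sb sb_mem)
      rw [map_pow] at this
      exact this.symm
    · refine ⟨.sr (i : Fin 4), ?_⟩
      have : ρ σ = ρ (S * R ^ (i : ℕ)) := key _ _ (e t t_mem) (e sb sb_mem)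
      rw [map_mul, map_pow] at this
      exact this.symm

/-- The embeddings of `ℚ(t)` are the restrictions of the powers of `R`. -/
def emb (_ : Frame a b g h n sa sb t t' R S) (i : Fin 4) : adjoin ℚ {t} →ₐ[ℚ] Qbar :=
  ((R ^ (i : ℕ) : Γ) : Qbar →ₐ[ℚ] Qbar).comp (adjoin ℚ {t}).val

lemma emb_apply (d : Frame a b g h n sa sb t t' R S) (i : Fin 4) (x : adjoin ℚ {t}) :
    d.emb i x = (R ^ (i : ℕ)) (x : Qbar) := rfl

lemma emb_bijective (d : Frame a b g h n sa sb t t' R S) : Function.Bijective d.emb := by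
  have n1 := d.t_ne_t'
  have n2 := d.t_ne_neg
  have n3 := self_ne_neg.2 d.t_ne
  have n5 := self_ne_neg.2 d.t'_ne
  constructor
  · intro i j hij
    have := congrArg (fun f => f ⟨t, mem_adjoin_simple_self ℚ t⟩) hij
    simp only [emb_apply] at this
    fin_cases i <;> fin_cases j <;>
      simp [pow_succ, d.Rt, d.Rt'] at this ⊢ <;>
      grind
  · intro f
    have key : ∀ i : Fin 4, f ⟨t, mem_adjoin_simple_self ℚ t⟩ = (R ^ (i : ℕ)) t → d.emb i = f := by
      intro i hi
      apply adjoin_algHom_ext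
      rintro x rfl
      rw [emb_apply, hi]
    have hfsa : (f ⟨sa, d.sa_mem'⟩) ^ 2 = sa ^ 2 := by
      rw [← map_pow, d.hsa]
      have : (⟨sa, d.sa_mem'⟩ : adjoin ℚ {t}) ^ 2 = (a : adjoin ℚ {t}) := by
        ext; simpa using d.hsa
      rw [this, map_intCast]
    have hft : (f ⟨t, mem_adjoin_simple_self ℚ t⟩) ^ 2 = g + h * f ⟨sa, d.sa_mem'⟩ := by
      rw [← map_pow]
      have : (⟨t, mem_adjoin_simple_self ℚ t⟩ : adjoin ℚ {t}) ^ 2 =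
          (g : adjoin ℚ {t}) + h * ⟨sa, d.sa_mem'⟩ := by
        ext; simpa using d.ht
      rw [this]; simp
    rcases sq_eq_sq_iff_eq_or_eq_neg.1 hfsa with e | e
    · rw [e, ← d.ht] at hft
      rcases sq_eq_sq_iff_eq_or_eq_neg.1 hft with e | e
      · exact ⟨0, key 0 (by simp [e])⟩
      · exact ⟨2, key 2 (by simp [e, pow_succ, d.Rt, d.Rt'])⟩
    · rw [e, mul_neg, ← sub_eq_add_neg, ← d.ht'] at hft
      rcases sq_eq_sq_iff_eq_or_eq_neg.1 hft with e | e
      · exact ⟨1, key 1 (by simp [e, d.Rt])⟩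
      · exact ⟨3, key 3 (by simp [e, pow_succ, d.Rt, d.Rt'])⟩

lemma finrank_K (d : Frame a b g h n sa sb t t' R S) :
    Module.finrank ℚ (adjoin ℚ {t}) = 4 := by
  have : FiniteDimensional ℚ (adjoin ℚ {t}) := finDim_adjoin
  rw [← AlgHom.card ℚ (adjoin ℚ {t}) Qbar, ← Fintype.card_of_bijective d.emb_bijective,
    Fintype.card_fin]

lemma isD4 (d : Frame a b g h n sa sb t t' R S) : IsD4Quartic (adjoin ℚ {t}) := by
  refine ⟨d.finrank_K, ?_⟩
  have e := d.nonempty_iso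
  rw [← d.galCl_eq] at e
  exact e

end Frame

/-- The Galois closure of a `D₄`-quartic field has degree eight. -/
lemma finrank_galCl {K : IntermediateField ℚ Qbar} (hK : IsD4Quartic K) :
    Module.finrank ℚ (galCl K) = 8 := by
  obtain ⟨h4, ⟨e⟩⟩ := hK
  have : FiniteDimensional ℚ K := Module.finite_of_finrank_eq_succ h4
  have : FiniteDimensional ℚ (galCl K) := normalClosure.is_finiteDimensional ℚ K Qbar
  have : Normal ℚ (galCl K) := normalClosure.normal ℚ K Qbar
  have : IsGalois ℚ (galCl K) := {}
  rw [← IsGalois.card_aut_eq_finrank, show Nat.card Gal(galCl K/ℚ) = Nat.card (DihedralGroup 4) from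
    Nat.card_congr e.toEquiv, DihedralGroup.nat_card]

/-! ### Quadratic subfields -/

lemma adjoin_eq_of_div {u v : Qbar} (hu : u ≠ 0) (hv : v ≠ 0)
    (h : u / v ∈ (⊥ : IntermediateField ℚ Qbar)) : adjoin ℚ {u} = adjoin ℚ {v} := by
  have hm : ∀ L : IntermediateField ℚ Qbar, u / v ∈ L := fun L => bot_le (a := L) h
  apply le_antisymm <;> rw [adjoin_simple_le_iff]
  · have := mul_mem (hm (adjoin ℚ {v})) (mem_adjoin_simple_self ℚ v)
    rwa [div_mul_cancel₀ _ hv] at this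
  · have := div_mem (mem_adjoin_simple_self ℚ u) (hm (adjoin ℚ {u}))
    rwa [div_div_cancel₀ hu] at this

/-- A quadratic field is generated by a square root of a rational number. -/
lemma exists_sqrt {F : IntermediateField ℚ Qbar} (hF : Module.finrank ℚ F = 2) :
    ∃ u : Qbar, u ∉ (⊥ : IntermediateField ℚ Qbar) ∧ (∃ q : ℚ, u ^ 2 = (q : Qbar)) ∧
      F = adjoin ℚ {u} := by
  have : FiniteDimensional ℚ F := Module.finite_of_finrank_eq_succ hF
  have hne : F ≠ ⊥ := by
    rintro rfl
    rw [IntermediateField.finrank_bot] at hF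
    omega
  obtain ⟨x, hxF, hx⟩ : ∃ x ∈ F, x ∉ (⊥ : IntermediateField ℚ Qbar) := by
    by_contra! hc
    exact hne (le_bot_iff.1 hc)
  have gen : ∀ y ∈ F, y ∉ (⊥ : IntermediateField ℚ Qbar) → F = adjoin ℚ {y} := by
    intro y hyF hy
    have hle : adjoin ℚ {y} ≤ F := by rwa [adjoin_simple_le_iff]
    have : FiniteDimensional ℚ (adjoin ℚ {y}) := finDim_adjoin
    have h1 := finrank_le_of_le_right hle
    have h2 : Module.finrank ℚ (adjoin ℚ {y}) ≠ 1 := by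
      intro e
      have e := IntermediateField.finrank_eq_one_iff.1 e
      exact hy (e ▸ mem_adjoin_simple_self ℚ y)
    have h3 : 0 < Module.finrank ℚ (adjoin ℚ {y}) := Module.finrank_pos
    exact (eq_of_le_of_finrank_eq hle (by omega)).symm
  have hint : IsIntegral ℚ x := Algebra.IsIntegral.isIntegral x
  have hdeg : (minpoly ℚ x).natDegree = 2 := by
    rw [← adjoin.finrank hint, ← gen x hxF hx, hF]
  have hroot := minpoly.aeval ℚ x
  rw [Polynomial.aeval_eq_sum_range, hdeg] at hroot
  have hlead : (minpoly ℚ x).coeff 2 = 1 := by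
    rw [← hdeg]; exact minpoly.monic hint
  set p := (minpoly ℚ x).coeff 1
  set q := (minpoly ℚ x).coeff 0
  simp only [Finset.sum_range_succ, Finset.sum_range_zero, hlead, Algebra.smul_def,
    eq_ratCast] at hroot
  have hp : ((p / 2 : ℚ) : Qbar) ∈ (⊥ : IntermediateField ℚ Qbar) :=
    IntermediateField.algebraMap_mem _ _
  have hy : x + ((p / 2 : ℚ) : Qbar) ∉ (⊥ : IntermediateField ℚ Qbar) := fun hc => hx (by
    simpa using sub_mem hc hp)
  refine ⟨x + ((p / 2 : ℚ) : Qbar), hy, ⟨p ^ 2 / 4 - q, ?_⟩, gen _ ?_ hy⟩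
  · push_cast
    simp only [pow_zero, pow_one, zero_add, mul_one, Rat.cast_one, one_mul] at hroot
    linear_combination hroot
  · exact add_mem hxF (bot_le (a := F) hp)

lemma finrank_quad {x : Qbar} {k : ℤ} (hx : x ∉ (⊥ : IntermediateField ℚ Qbar))
    (hk : x ^ 2 = (k : Qbar)) : Module.finrank ℚ (adjoin ℚ {x}) = 2 := by
  have hint : IsIntegral ℚ x := Algebra.IsIntegral.isIntegral x
  have : FiniteDimensional ℚ (adjoin ℚ {x}) := finDim_adjoin
  have h2 : Module.finrank ℚ (adjoin ℚ {x}) ≠ 1 := by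
    intro e
    have e := IntermediateField.finrank_eq_one_iff.1 e
    exact hx (e ▸ mem_adjoin_simple_self ℚ x)
  have h3 : 0 < Module.finrank ℚ (adjoin ℚ {x}) := Module.finrank_pos
  have h4 : Module.finrank ℚ (adjoin ℚ {x}) ≤ 2 := by
    rw [adjoin.finrank hint]
    have hm : (Polynomial.X ^ 2 - Polynomial.C (k : ℚ)).Monic :=
      Polynomial.monic_X_pow_sub_C _ two_ne_zero
    refine (Polynomial.natDegree_le_natDegree (minpoly.min ℚ x hm (by simp [hk]))).trans ?_
    rw [Polynomial.natDegree_X_pow_sub_C]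
  omega

namespace Frame

variable {a b g h n : ℤ} {sa sb t t' : Qbar} {R S : Gal(Qbar/ℚ)}

lemma signs {u : Qbar} {q : ℚ} (hq : u ^ 2 = (q : Qbar)) (σ : Γ) : σ u = u ∨ σ u = -u :=
  sign_of_sq (by rw [hq]; simp)

/-- A rational square root `u` in the Galois closure with `R u = -u` and `S u = u` is a rational
multiple of `√a`. -/
lemma div_sa_mem (d : Frame a b g h n sa sb t t' R S) {u : Qbar} (hu : u ∈ adjoin ℚ {t, sb})
    (hR : R u = -u) (hS : S u = u) : u / sa ∈ (⊥ : IntermediateField ℚ Qbar) :=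
  d.mem_bot (div_mem hu d.sa_mem) (by simp [hR, d.Rsa]) (by simp [hS, d.Ssa])

lemma div_sb_mem (d : Frame a b g h n sa sb t t' R S) {u : Qbar} (hu : u ∈ adjoin ℚ {t, sb})
    (hR : R u = -u) (hS : S u = -u) : u / sb ∈ (⊥ : IntermediateField ℚ Qbar) :=
  d.mem_bot (div_mem hu sb_mem) (by simp [hR, d.Rsb]) (by simp [hS, d.Ssb])

/-- A quadratic field inside the Galois closure that is fixed by some reflection is `ℚ(√a)` or
`ℚ(√b)`: reflections move `√(ab)`. -/
lemma quadratic_cases (d : Frame a b g h n sa sb t t' R S) {F : IntermediateField ℚ Qbar}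
    (hF : Module.finrank ℚ F = 2) (hFN : F ≤ adjoin ℚ {t, sb}) (i : ℕ)
    (hfix : ∀ x ∈ F, (S * R ^ i) x = x) : F = adjoin ℚ {sa} ∨ F = adjoin ℚ {sb} := by
  obtain ⟨u, hu, ⟨q, hq⟩, rfl⟩ := exists_sqrt hF
  have hu0 : u ≠ 0 := fun e => hu (e ▸ zero_mem _)
  have huF := mem_adjoin_simple_self ℚ u
  have huN := hFN huF
  rcases signs hq R with hR | hR <;> rcases signs hq S with hS | hS
  · exact absurd (d.mem_bot huN hR hS) hu
  · have := hfix u huF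
    rw [AlgEquiv.mul_apply, pow_fix hR, hS] at this
    exact absurd this.symm (self_ne_neg.2 hu0)
  · exact .inl (adjoin_eq_of_div hu0 d.sa_ne (d.div_sa_mem huN hR hS))
  · exact .inr (adjoin_eq_of_div hu0 d.sb_ne (d.div_sb_mem huN hR hS))

lemma S_fix (d : Frame a b g h n sa sb t t' R S) {x : Qbar} (hx : x ∈ adjoin ℚ {t}) :
    S x = x := by
  have := agree_adjoin (σ := S) (τ := 1) (by rintro y rfl; simpa using d.St) hx
  simpa using this

lemma unique_quadratic (d : Frame a b g h n sa sb t t' R S) {F : IntermediateField ℚ Qbar}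
    (hF : Module.finrank ℚ F = 2) (hFK : F ≤ adjoin ℚ {t}) : F = adjoin ℚ {sa} := by
  refine (d.quadratic_cases hF (hFK.trans adjoin_le) 0 fun x hx => ?_).resolve_right ?_
  · simpa using d.S_fix (hFK hx)
  · rintro rfl
    have := d.S_fix (hFK (mem_adjoin_simple_self ℚ sb))
    rw [d.Ssb] at this
    exact self_ne_neg.2 d.sb_ne this.symm

/-- The square of the rotation is central. -/
lemma R2_comm (d : Frame a b g h n sa sb t t' R S) (σ : Γ) {x : Qbar}
    (hx : x ∈ adjoin ℚ {t, sb}) : (R * R) (σ x) = σ ((R * R) x) := by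
  have := agree_adjoin (σ := R * R * σ) (τ := σ * (R * R)) (S := {t, sb}) ?_ hx
  · simpa using this
  rintro y (rfl | rfl)
  · rcases d.cases σ with e | e | e | e | e | e | e | e <;>
      simp [e.1, d.Rt, d.Rt']
  · rcases d.sb_cases σ with e | e <;> simp [e, d.Rsb]

/-- A `D₄`-quartic subfield of the Galois closure is fixed by a reflection. Otherwise it is fixed
by the central element `R²`, which then fixes its Galois closure as well; but that is everything,
by comparison of degrees. -/
lemma exists_reflection (d : Frame a b g h n sa sb t t' R S) {K' : IntermediateField ℚ Qbar}
    (hK' : IsD4Quartic K') (hle : K' ≤ adjoin ℚ {t, sb}) :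
    ∃ i : ℕ, ∀ x ∈ K', (S * R ^ i) x = x := by
  by_contra! hno
  have := d.normal_N
  have : FiniteDimensional ℚ (adjoin ℚ {t, sb}) := finDim_adjoin
  have : FiniteDimensional ℚ K' := Module.finite_of_finrank_eq_succ hK'.1
  have h8 : Module.finrank ℚ (adjoin ℚ {t, sb}) = 8 := by
    rw [← d.galCl_eq]; exact finrank_galCl d.isD4
  have hN : galCl K' = adjoin ℚ {t, sb} :=
    eq_of_le_of_finrank_eq (normalClosure_le_iff_of_normal.2 hle) (by rw [finrank_galCl hK', h8])
  have hR2 : ∀ x ∈ K', (R * R) x = x := by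
    obtain ⟨σ, hσ, hσN⟩ : ∃ σ : Γ, (∀ x ∈ K', σ x = x) ∧ ∃ y ∈ adjoin ℚ {t, sb}, σ y ≠ y := by
      by_contra! hc
      have : adjoin ℚ {t, sb} ≤ K' := fun y hy => mem_of_fixed fun σ hσ => hc σ hσ y hy
      have := finrank_le_of_le_right this
      rw [h8, hK'.1] at this
      omega
    obtain ⟨y, hy, hσy⟩ := hσN
    obtain ⟨i, e | e⟩ := d.word σ
    · intro x hx
      have h1 : (R ^ (i : ℕ)) x = x := by rw [← e x (hle hx), hσ x hx]
      have h4 : ∀ k : ℕ, (R ^ ((i : ℕ) * k)) x = x := fun k => by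
        rw [pow_mul]; exact pow_fix h1 k
      have hR4 : (R ^ 4) x = x := by
        have := agree_adjoin (σ := R ^ 4) (τ := 1) (S := {t, sb}) ?_ (hle hx)
        · simpa using this
        rintro y (rfl | rfl)
        · simp [pow_succ, d.Rt, d.Rt']
        · simp [pow_succ, d.Rsb]
      fin_cases i
      · exact absurd (by simpa using e y hy) hσy
      · simpa [pow_succ] using h4 2
      · simpa [pow_succ] using h1
      · have h6 : (R ^ 6) x = x := h4 2
        rw [show 6 = 2 + 4 from rfl, pow_add, AlgEquiv.mul_apply, hR4] at h6
        simpa [pow_succ] using h6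
    · obtain ⟨x, hx, hne⟩ := hno i
      exact absurd ((e x (hle hx)).symm.trans (hσ x hx)) hne
  have hfix : galCl K' ≤ fixedField (Subgroup.zpowers (R * R)) := by
    have e : galCl K' = ⨆ f : Γ, K'.map (f : Qbar →ₐ[ℚ] Qbar) := normalClosure_def'' _
    rw [e]
    refine iSup_le fun σ => ?_
    rintro _ ⟨x, hx, rfl⟩
    rw [mem_fixedField_iff]
    have h1 : (R * R) (σ x) = σ x := by rw [d.R2_comm σ (hle hx), hR2 x hx]
    intro τ hτ
    have : Subgroup.zpowers (R * R) ≤ MulAction.stabilizer Γ (σ x) := by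
      rw [Subgroup.zpowers_le]; exact h1
    exact this hτ
  have ht : t ∈ fixedField (Subgroup.zpowers (R * R)) := hfix (hN ▸ t_mem)
  have := (mem_fixedField_iff _ _).1 ht _ (Subgroup.mem_zpowers (R * R))
  rw [AlgEquiv.mul_apply, d.Rt, d.Rt'] at this
  exact self_ne_neg.2 d.t_ne this.symm

lemma mem_F4a (d : Frame a b g h n sa sb t t' R S) : adjoin ℚ {t} ∈ F4a sa sb := by
  have hsaK : adjoin ℚ {sa} ≤ adjoin ℚ {t} := adjoin_simple_le_iff.2 d.sa_mem'
  refine ⟨⟨d.isD4, ?_, fun F => ⟨?_, ?_⟩⟩, hsaK, fun F h1 h2 => d.unique_quadratic h2 h1⟩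
  · rw [d.galCl_eq, adjoin_le_iff]
    rintro x (rfl | rfl)
    exacts [d.sa_mem, sb_mem]
  · rintro ⟨-, hF, K', hK', hle, hFK'⟩
    rw [d.galCl_eq] at hle
    obtain ⟨i, hi⟩ := d.exists_reflection hK' hle
    exact d.quadratic_cases hF (hFK'.trans hle) i fun x hx => hi x (hFK' hx)
  · obtain ⟨R', S', d'⟩ := d.swap.exists_frame
    rintro (rfl | rfl)
    · refine ⟨?_, finrank_quad d.ia d.hsa, adjoin ℚ {t}, d.isD4, ?_, hsaK⟩ <;> rw [d.galCl_eq]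
      exacts [hsaK.trans adjoin_le, adjoin_le]
    · refine ⟨?_, finrank_quad d.ib d.hsb, adjoin ℚ {t + t'}, d'.isD4, ?_, ?_⟩
      · rw [d.galCl_eq, adjoin_simple_le_iff]; exact sb_mem
      · rw [d.galCl_eq, adjoin_simple_le_iff]; exact add_mem t_mem d.t'_mem
      · rw [adjoin_simple_le_iff]; exact d'.sa_mem'

end Frame

/-! ### The discriminant bound -/

/-- A family of integral elements, as many as the degree, whose discriminant is nonzero spans a
lattice of finite index in the ring of integers; the discriminant of the field divides that of the
family. -/
lemma discr_le {K : Type} [Field K] [NumberField K] [inst : Algebra ℚ K] {v : Fin 4 → K}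
    (hv : ∀ i, IsIntegral ℤ (v i)) (e : Fin 4 ≃ (K →ₐ[ℚ] Qbar)) {N : ℤ} (hN : N ≠ 0)
    (hdet : (Matrix.of fun i j => e j (v i)).det ^ 2 = (N : Qbar)) :
    (NumberField.discr K).natAbs ≤ N.natAbs := by
  have hinst : inst = DivisionRing.toRatAlgebra := Subsingleton.elim _ _
  subst hinst
  classical
  have h4 : Module.finrank ℚ K = 4 := by
    rw [← AlgHom.card ℚ K Qbar, ← Fintype.card_congr e, Fintype.card_fin]
  have hcard : Fintype.card (Module.Free.ChooseBasisIndex ℤ (NumberField.RingOfIntegers K)) =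
      Fintype.card (Fin 4) := by
    rw [← Module.finrank_eq_card_chooseBasisIndex, NumberField.RingOfIntegers.rank, h4,
      Fintype.card_fin]
  let f := Fintype.equivOfCardEq hcard
  let B : Module.Basis (Fin 4) ℚ K := (NumberField.integralBasis K).reindex f
  have hB : Algebra.discr ℚ B = NumberField.discr K := by
    rw [NumberField.coe_discr, Module.Basis.coe_reindex, Algebra.discr_reindex]
  have hint : ∀ i j, ∃ k : ℤ, B.repr (v j) i = k := fun i j => by
    refine ⟨(NumberField.RingOfIntegers.basis K).repr ⟨v j, hv j⟩ (f.symm i), ?_⟩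
    rw [Module.Basis.repr_reindex_apply]
    exact NumberField.integralBasis_repr_apply K ⟨v j, hv j⟩ (f.symm i)
  choose P hP using hint
  have hvB : v = Matrix.vecMul B (((Matrix.of P).map (Int.castRingHom ℚ)).map (algebraMap ℚ K)) := by
    ext j
    rw [← B.sum_repr (v j)]
    simp [Matrix.vecMul, dotProduct, hP, Algebra.smul_def, mul_comm]
  have h1 : Algebra.discr ℚ v = (Matrix.of P).det ^ 2 * NumberField.discr K := by
    rw [← hB, hvB, Algebra.discr_of_matrix_vecMul, ← RingHom.mapMatrix_apply, ← RingHom.map_det,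
      eq_intCast]
  have h2 : Algebra.discr ℚ v = N := by
    have := Algebra.discr_eq_det_embeddingsMatrixReindex_pow_two ℚ Qbar v e
    have hm : Algebra.embeddingsMatrixReindex ℚ Qbar v e = Matrix.of fun i j => e j (v i) := rfl
    rw [hm, hdet, eq_ratCast] at this
    exact_mod_cast this
  have h3 : N = (Matrix.of P).det ^ 2 * NumberField.discr K := by
    rw [h2] at h1; exact_mod_cast h1
  exact Nat.le_of_dvd (Int.natAbs_pos.2 hN) (Int.natAbs_dvd_natAbs.2 ⟨_, h3.trans (mul_comm _ _)⟩)

namespace Frame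

variable {a b g h n : ℤ} {sa sb t t' : Qbar} {R S : Gal(Qbar/ℚ)}

/-- The bound comes from the integral family `1, √a, t, t√a`, whose discriminant is
`256 a² n² b`. -/
lemma absDisc_le (d : Frame a b g h n sa sb t t' R S) :
    absDisc (adjoin ℚ {t}) ≤ (256 * a ^ 2 * n ^ 2 * b).natAbs := by
  have hfd : FiniteDimensional ℚ (adjoin ℚ {t}) := finDim_adjoin
  have hnf : NumberField (adjoin ℚ {t}) := ⟨⟩
  have h1 : absDisc (adjoin ℚ {t}) = (NumberField.discr (adjoin ℚ {t})).natAbs := dif_pos hfd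
  rw [h1]
  have isa : IsIntegral ℤ sa := IsIntegral.of_pow two_pos (by
    rw [d.hsa]
    exact isIntegral_algebraMap)
  have it : IsIntegral ℤ t := IsIntegral.of_pow two_pos (by
    rw [d.ht]
    exact (isIntegral_algebraMap (x := g)).add ((isIntegral_algebraMap (x := h)).mul isa))
  let x : adjoin ℚ {t} := ⟨sa, d.sa_mem'⟩
  let y : adjoin ℚ {t} := ⟨t, mem_adjoin_simple_self ℚ t⟩
  have hx : IsIntegral ℤ x := by
    rw [← isIntegral_algebraMap_iff (B := Qbar) (algebraMap (adjoin ℚ {t}) Qbar).injective]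
    exact isa
  have hy : IsIntegral ℤ y := by
    rw [← isIntegral_algebraMap_iff (B := Qbar) (algebraMap (adjoin ℚ {t}) Qbar).injective]
    exact it
  have ha : a ≠ 0 := by
    rintro rfl
    exact d.sa_ne (pow_eq_zero_iff two_ne_zero |>.1 (by simpa using d.hsa))
  have hb : b ≠ 0 := by
    rintro rfl
    exact d.sb_ne (pow_eq_zero_iff two_ne_zero |>.1 (by simpa using d.hsb))
  refine discr_le (v := ![1, x, y, y * x]) ?_ (Equiv.ofBijective d.emb d.emb_bijective)
    (by have := d.n0; positivity) ?_
  · intro i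
    fin_cases i
    exacts [isIntegral_one, hx, hy, hy.mul hx]
  · have hM : (Matrix.of fun i j => (Equiv.ofBijective d.emb d.emb_bijective) j
        ((![1, x, y, y * x] : Fin 4 → adjoin ℚ {t}) i)) =
        !![1, 1, 1, 1; sa, -sa, sa, -sa; t, t', -t, -t';
          t * sa, -(t' * sa), -(t * sa), t' * sa] := by
      ext i j
      fin_cases i <;> fin_cases j <;>
        simp [emb_apply, x, y, d.Rt, d.Rt', d.Rsa]
    rw [hM]
    have hdet : (!![1, 1, 1, 1; sa, -sa, sa, -sa; t, t', -t, -t';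
          t * sa, -(t' * sa), -(t * sa), t' * sa] : Matrix (Fin 4) (Fin 4) Qbar).det ^ 2 =
          256 * (sa ^ 2) ^ 2 * (t * t') ^ 2 := by
      simp [Matrix.det_succ_row_zero, Fin.sum_univ_succ, Fin.succAbove]
      ring
    rw [hdet, d.hsa, d.htt, mul_pow, d.hsb]
    push_cast
    ring

end Frame

/-! ### The fields `K_[m]` -/

lemma not_mem_bot {a : ℤ} {s : Qbar} (h : s ^ 2 = (a : Qbar)) (ha : ¬ IsSquare a) :
    s ∉ (⊥ : IntermediateField ℚ Qbar) := by
  intro hs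
  obtain ⟨q, rfl⟩ := IntermediateField.mem_bot.1 hs
  apply ha
  rw [← Rat.isSquare_intCast_iff]
  refine ⟨q, ?_⟩
  rw [eq_ratCast, ← Rat.cast_pow, ← Rat.cast_intCast (α := Qbar), Rat.cast_inj] at h
  rw [← h, sq]

lemma not_isSquare {a : ℤ} (ha : Squarefree a) (ha1 : a ≠ 1) : ¬ IsSquare a := by
  rintro ⟨k, rfl⟩
  have : IsUnit k := ha k dvd_rfl
  rcases Int.isUnit_iff.1 this with rfl | rfl <;> simp at ha1

/-- Square-free integers with square product are equal. -/
lemma eq_of_isSquare_mul {a b : ℤ} (ha : Squarefree a) (hb : Squarefree b)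
    (h : IsSquare (a * b)) : a = b := by
  obtain ⟨k, hk⟩ := h
  have key : ∀ {a b : ℤ}, Squarefree a → a * b = k * k → a ∣ b := by
    intro a b ha h
    obtain ⟨j, rfl⟩ : a ∣ k := (ha.dvd_pow_iff_dvd two_ne_zero).1 ⟨b, by rw [sq, h]⟩
    exact ⟨j * j, mul_left_cancel₀ ha.ne_zero (by linear_combination h)⟩
  have h1 := key ha hk
  have h2 := key hb (by rw [mul_comm, hk])
  have h3 : 0 ≤ a * b := by rw [hk]; exact mul_self_nonneg k
  rcases Int.associated_iff.1 (associated_of_dvd_dvd h1 h2) with e | e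
  · exact e
  · exfalso
    rw [e] at h3
    have := mul_self_pos.2 hb.ne_zero
    nlinarith

section

variable {a b g₀ h₀ n₀ : ℤ} {sa sb : Qbar}

/-- The generator of `K_[m]` spans a radical `D₄` extension, with `n = n₀ m`. -/
lemma rad_of (ha : Squarefree a) (hb : Squarefree b) (hab : a ≠ b) (ha1 : a ≠ 1) (hb1 : b ≠ 1)
    (hsa : sa ^ 2 = (a : Qbar)) (hsb : sb ^ 2 = (b : Qbar)) (hh₀ : 0 < h₀) (hn₀ : 0 < n₀)
    (heq : g₀ ^ 2 - h₀ ^ 2 * a = n₀ ^ 2 * b) {m : ℕ} (hm : 0 < m) {t : Qbar}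
    (ht : t ^ 2 = ((g₀ * m : ℤ) : Qbar) + ((h₀ * m : ℤ) : Qbar) * sa) :
    Rad a b (g₀ * m) (h₀ * m) (n₀ * m) sa sb t ((n₀ * m : ℤ) * sb / t) := by
  have heq' : ((g₀ * m : ℤ) : Qbar) ^ 2 - ((h₀ * m : ℤ) : Qbar) ^ 2 * a =
      ((n₀ * m : ℤ) : Qbar) ^ 2 * b := by
    have : (g₀ : Qbar) ^ 2 - h₀ ^ 2 * a = n₀ ^ 2 * b := by exact_mod_cast heq
    push_cast
    linear_combination (m : Qbar) ^ 2 * this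
  have hnm : n₀ * m ≠ 0 := (mul_pos hn₀ (Int.natCast_pos.2 hm)).ne'
  have ht0 : t ≠ 0 := by
    rintro rfl
    have hz : ((n₀ * m : ℤ) : Qbar) ^ 2 * b = 0 := by
      rw [← heq', ← hsa]
      linear_combination (((g₀ * m : ℤ) : Qbar) - ((h₀ * m : ℤ) : Qbar) * sa) * -ht
    have := hb.ne_zero
    have h2 : ((n₀ * m : ℤ) : Qbar) ^ 2 * b ≠ 0 :=
      mul_ne_zero (pow_ne_zero _ (Int.cast_ne_zero.2 hnm)) (Int.cast_ne_zero.2 this)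
    exact h2 hz
  exact
    { hsa := hsa
      hsb := hsb
      ht := ht
      ht' := by
        rw [div_pow, div_eq_iff (pow_ne_zero _ ht0), mul_pow, hsb, ← heq', ht, ← hsa]
        ring
      htt := mul_div_cancel₀ _ ht0
      h0 := (mul_pos hh₀ (Int.natCast_pos.2 hm)).ne'
      n0 := hnm
      ia := not_mem_bot hsa (not_isSquare ha ha1)
      ib := not_mem_bot hsb (not_isSquare hb hb1)
      iab := not_mem_bot (a := a * b) (by rw [mul_pow, hsa, hsb]; push_cast; rfl) fun h =>
        hab (eq_of_isSquare_mul ha hb h) }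

/-- The square-free integer `m` is determined by the field `K_[m]`: if `K_[m] = K_[m']` then
`√(m m')` lies in it, hence `m m'` is a rational square or `a` times one; the latter is excluded
because `m` and `m'` are positive and prime to `a`. -/
lemma injective_aux {m₁ m₂ : ℕ} {t₁ t₂ t' : Qbar} {h n : ℤ} (hm₁ : Squarefree m₁)
    (hm₂ : Squarefree m₂) (hc₁ : Nat.Coprime m₁ (a * b).natAbs)
    (hc₂ : Nat.Coprime m₂ (a * b).natAbs) (ha : Squarefree a) (ha1 : a ≠ 1)
    (d : Rad a b (g₀ * m₁) h n sa sb t₁ t') (hh : h = h₀ * m₁)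
    (ht₂ : t₂ ^ 2 = ((g₀ * m₂ : ℤ) : Qbar) + ((h₀ * m₂ : ℤ) : Qbar) * sa)
    (hK : t₂ ∈ adjoin ℚ {t₁}) : m₁ = m₂ := by
  obtain ⟨R, S, f⟩ := d.exists_frame
  subst hh
  have p₁ : 0 < m₁ := Nat.pos_of_ne_zero hm₁.ne_zero
  have p₂ : 0 < m₂ := Nat.pos_of_ne_zero hm₂.ne_zero
  have hm₁' : (m₁ : Qbar) ≠ 0 := Nat.cast_ne_zero.2 hm₁.ne_zero
  set w := m₁ * t₂ / t₁ with hw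
  have hw2 : w ^ 2 = ((m₁ * m₂ : ℤ) : Qbar) := by
    rw [hw, div_pow, div_eq_iff (pow_ne_zero _ d.t_ne), d.ht, mul_pow, ht₂]
    push_cast
    ring
  have hwK : w ∈ adjoin ℚ {t₁} :=
    div_mem (mul_mem (_root_.natCast_mem _ _) hK) (mem_adjoin_simple_self ℚ t₁)
  have hS := f.S_fix hwK
  rcases Frame.signs (q := (m₁ * m₂ : ℤ)) (by rw [hw2, Rat.cast_intCast]) R with hR | hR
  · have hbot := f.mem_bot (Frame.adjoin_le hwK) hR hS
    have : IsSquare (m₁ * m₂ : ℤ) := by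
      by_contra hc
      exact not_mem_bot hw2 hc hbot
    have := eq_of_isSquare_mul (Int.squarefree_natCast.2 hm₁) (Int.squarefree_natCast.2 hm₂) this
    exact_mod_cast this
  · exfalso
    have hbot := f.div_sa_mem (Frame.adjoin_le hwK) hR hS
    have hbot' : w * sa ∈ (⊥ : IntermediateField ℚ Qbar) := by
      have := mul_mem hbot (int_mem ⊥ a)
      rwa [← d.hsa, sq, ← mul_assoc, div_mul_cancel₀ _ d.sa_ne] at this
    have hsq : IsSquare (m₁ * m₂ * a : ℤ) := by
      by_contra hc
      refine not_mem_bot ?_ hc hbot'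
      rw [mul_pow, hw2, d.hsa]
      push_cast
      rfl
    obtain ⟨k, hk⟩ := hsq
    obtain ⟨j, rfl⟩ : a ∣ k := (ha.dvd_pow_iff_dvd two_ne_zero).1 ⟨m₁ * m₂, by rw [sq, ← hk]; ring⟩
    have hdvd : a ∣ m₁ * m₂ := ⟨j * j, mul_right_cancel₀ ha.ne_zero (by linear_combination hk)⟩
    have hcop : ∀ {m : ℕ}, Nat.Coprime m (a * b).natAbs → IsCoprime a (m : ℤ) := fun hm => by
      rw [Int.isCoprime_iff_nat_coprime, Int.natAbs_natCast]
      rw [Int.natAbs_mul] at hm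
      exact (Nat.Coprime.coprime_mul_right_right hm).symm
    have hu : IsUnit a := (hcop hc₂).isUnit_of_dvd' dvd_rfl ((hcop hc₁).dvd_of_dvd_mul_left hdvd)
    have hpos : (0 : ℤ) < m₁ * m₂ := by positivity
    rcases Int.isUnit_iff.1 hu with e | e
    · exact ha1 e
    · rw [e] at hk
      nlinarith [mul_self_nonneg j]

end

/-- The bound on `m` in the definition of `M_a(a,b;X)` makes the discriminant of the family
`1, √a, t, t√a` at most `X`. -/
lemma bound_le {a b n₀ : ℤ} {m D : ℕ} {X : ℝ} (ha : a ≠ 0) (hb : b ≠ 0) (hn₀ : 0 < n₀)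
    (hm0 : 0 < m) (hm : (m : ℝ) ≤ Real.sqrt X /
      (16 * (n₀ : ℝ) * Real.sqrt ((a.natAbs : ℝ) ^ 3 * (b.natAbs : ℝ) ^ 3)))
    (hD : D ≤ (256 * a ^ 2 * (n₀ * m) ^ 2 * b).natAbs) : (D : ℝ) ≤ X := by
  have hA : (1 : ℝ) ≤ a.natAbs := Nat.one_le_cast.2 (Int.natAbs_pos.2 ha)
  have hB : (1 : ℝ) ≤ b.natAbs := Nat.one_le_cast.2 (Int.natAbs_pos.2 hb)
  have hn : (0 : ℝ) < n₀ := Int.cast_pos.2 hn₀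
  have hm0' : (0 : ℝ) < m := Nat.cast_pos.2 hm0
  have e : (((256 * a ^ 2 * (n₀ * m) ^ 2 * b).natAbs : ℕ) : ℝ) =
      256 * (a.natAbs : ℝ) ^ 2 * (n₀ * m) ^ 2 * b.natAbs := by
    simp only [Nat.cast_natAbs, Int.cast_abs, Int.cast_mul, Int.cast_pow, Int.cast_ofNat,
      Int.cast_natCast, abs_mul, abs_pow]
    rw [abs_of_pos hn, abs_of_pos hm0']
    norm_num
  refine (Nat.cast_le.2 hD).trans ?_
  rw [e]
  set A : ℝ := (a.natAbs : ℝ)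
  set B : ℝ := (b.natAbs : ℝ)
  have hC : 0 < 16 * (n₀ : ℝ) * Real.sqrt (A ^ 3 * B ^ 3) := by positivity
  rw [le_div_iff₀ hC] at hm
  have hX : 0 < Real.sqrt X := lt_of_lt_of_le (by positivity) hm
  have h2 := pow_le_pow_left₀ (by positivity) hm 2
  rw [Real.sq_sqrt (Real.sqrt_pos.1 hX).le, mul_pow, mul_pow, Real.sq_sqrt (by positivity)] at h2
  refine le_trans ?_ h2
  have h3 : A ^ 2 * B ≤ A ^ 3 * B ^ 3 := by
    gcongr
    · norm_num
    · exact le_self_pow₀ hB (by norm_num)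
  calc 256 * A ^ 2 * (n₀ * m) ^ 2 * B = 256 * (n₀ * m) ^ 2 * (A ^ 2 * B) := by ring
    _ ≤ 256 * (n₀ * m) ^ 2 * (A ^ 3 * B ^ 3) := by gcongr
    _ = _ := by ring

/-! ### Counting square-free integers -/

/-- Square-free integers prime to `P` have positive lower density. Among the integers `1 + P k`
with `k < N`, those divisible by `d²` number at most `N / d² + 1`, and only `d ≥ 2` prime to `P`
with `d² ≤ P N` matter; since `∑_{d ≥ 2} 1 / d² ≤ 3 / 4`, about a quarter survive. -/
lemma count_squarefree {P : ℕ} (hP : 0 < P) (N : ℕ) :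
    (N : ℝ) / 4 - (Nat.sqrt (P * N) + 1) ≤
      ((Finset.range N).filter fun k => Squarefree (1 + P * k)).card := by
  classical
  set D := Nat.sqrt (P * N) with hD
  -- the integers `1 + P k` divisible by `d²`
  let bad : ℕ → Finset ℕ := fun d => (Finset.range N).filter fun k => d ^ 2 ∣ 1 + P * k
  have hbad : ∀ d ∈ Finset.Icc 2 D, ((bad d).card : ℝ) ≤ N * (1 / (d : ℝ) ^ 2) + 1 := by
    intro d hd
    have hd2 : 0 < d ^ 2 := by have := (Finset.mem_Icc.1 hd).1; positivity
    by_cases hemp : (bad d) = ∅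
    · rw [hemp]; simp; positivity
    obtain ⟨k₀, hk₀⟩ := Finset.nonempty_iff_ne_empty.2 hemp
    have hk₀' : d ^ 2 ∣ 1 + P * k₀ := (Finset.mem_filter.1 hk₀).2
    have hcop : Nat.Coprime (d ^ 2) P := by
      have h1 : Nat.Coprime (1 + P * k₀) P := by simp
      exact Nat.Coprime.coprime_dvd_left hk₀' h1
    have hsub : bad d ⊆ (Finset.range N).filter fun k => k ≡ k₀ [MOD d ^ 2] := by
      intro k hk
      refine Finset.mem_filter.2 ⟨(Finset.mem_filter.1 hk).1, ?_⟩
      have hk' : d ^ 2 ∣ 1 + P * k := (Finset.mem_filter.1 hk).2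
      have : 1 + P * k ≡ 1 + P * k₀ [MOD d ^ 2] :=
        (Nat.modEq_zero_iff_dvd.2 hk').trans (Nat.modEq_zero_iff_dvd.2 hk₀').symm
      exact (Nat.ModEq.add_left_cancel' 1 this).cancel_left_of_coprime hcop
    have hcard := Finset.card_le_card hsub
    rw [← Nat.count_eq_card_filter_range (p := fun k => k ≡ k₀ [MOD d ^ 2]),
      Nat.count_modEq_card N hd2] at hcard
    have h3 : (bad d).card ≤ N / d ^ 2 + 1 := hcard.trans (by gcongr; split_ifs <;> simp)
    calc ((bad d).card : ℝ) ≤ ((N / d ^ 2 : ℕ) : ℝ) + 1 := by exact_mod_cast h3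
      _ ≤ N / ((d ^ 2 : ℕ) : ℝ) + 1 := by gcongr; exact Nat.cast_div_le
      _ = _ := by push_cast; ring
  -- by telescoping, from `1 / d² ≤ 1 / (d - 1) - 1 / d` for `d ≥ 3`
  have hsum : ∀ M : ℕ,
      ∑ d ∈ Finset.Icc 2 (M + 2), 1 / (d : ℝ) ^ 2 ≤ 3 / 4 - 1 / ((M : ℝ) + 2) := by
    intro M
    induction M with
    | zero => norm_num
    | succ M ih =>
      rw [show M + 1 + 2 = (M + 2) + 1 by ring, Finset.sum_Icc_succ_top (by omega)]
      have : 1 / ((M : ℝ) + 3) ^ 2 ≤ 1 / ((M : ℝ) + 2) - 1 / ((M : ℝ) + 3) := by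
        rw [div_sub_div _ _ (by positivity) (by positivity),
          div_le_div_iff₀ (by positivity) (by positivity)]
        nlinarith
      push_cast
      have e1 : (M : ℝ) + 2 + 1 = M + 3 := by ring
      have e2 : (M : ℝ) + 1 + 2 = M + 3 := by ring
      rw [e1, e2]
      linarith
  have hsum' : ∑ d ∈ Finset.Icc 2 D, 1 / (d : ℝ) ^ 2 ≤ 3 / 4 := by
    refine (Finset.sum_le_sum_of_subset_of_nonneg
      (Finset.Icc_subset_Icc_right (by omega : D ≤ D + 2)) fun _ _ _ => by positivity).trans ((hsum D).trans ?_)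
    have : 0 ≤ 1 / ((D : ℝ) + 2) := by positivity
    linarith
  have hcover : Finset.range N ⊆ ((Finset.range N).filter fun k => Squarefree (1 + P * k)) ∪
      (Finset.Icc 2 D).biUnion bad := by
    intro k hk
    by_cases hs : Squarefree (1 + P * k)
    · exact Finset.mem_union_left _ (Finset.mem_filter.2 ⟨hk, hs⟩)
    · refine Finset.mem_union_right _ ?_
      rw [Nat.squarefree_iff_prime_squarefree] at hs
      push Not at hs
      obtain ⟨p, hp, hpd⟩ := hs
      rw [← sq] at hpd
      refine Finset.mem_biUnion.2 ⟨p, Finset.mem_Icc.2 ⟨hp.two_le, ?_⟩,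
        Finset.mem_filter.2 ⟨hk, hpd⟩⟩
      rw [hD, Nat.le_sqrt, ← sq]
      refine (Nat.le_of_dvd (by omega) hpd).trans ?_
      have := Finset.mem_range.1 hk
      nlinarith
  have h1 : N ≤ ((Finset.range N).filter fun k => Squarefree (1 + P * k)).card +
      ∑ d ∈ Finset.Icc 2 D, (bad d).card := by
    have := (Finset.card_le_card hcover).trans (Finset.card_union_le _ _)
    rw [Finset.card_range] at this
    exact this.trans (Nat.add_le_add_left Finset.card_biUnion_le _)
  have h2 : ∑ d ∈ Finset.Icc 2 D, ((bad d).card : ℝ) ≤ N * (3 / 4) + D := by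
    refine (Finset.sum_le_sum hbad).trans ?_
    rw [Finset.sum_add_distrib, ← Finset.mul_sum]
    gcongr
    simp
  have h3 : (N : ℝ) ≤ ((Finset.range N).filter fun k => Squarefree (1 + P * k)).card +
      ∑ d ∈ Finset.Icc 2 D, ((bad d).card : ℝ) := by exact_mod_cast h1
  linarith

/-! ### The sets `M_a(a,b;X)` and Hermite's theorem -/

lemma Mset_finite (a b n₀ : ℤ) (X : ℝ) : (Mset a b n₀ X).Finite := by
  refine (Set.finite_Iic (Nat.floor (Real.sqrt X /
      (16 * (n₀ : ℝ) * Real.sqrt ((a.natAbs : ℝ) ^ 3 * (b.natAbs : ℝ) ^ 3))))).subset ?_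
  rintro m ⟨-, -, -, hm⟩
  exact Nat.le_floor hm

/-- `|M_a(a,b;X)|` is bounded below by a constant multiple of `√X`: for `N = ⌊Y / P⌋`, where `Y` is
the bound on `m` and `P = |ab|`, all `1 + P k` with `k < N` are prime to `P` and at most `Y`. -/
lemma le_Mset_ncard {a b n₀ : ℤ} (ha : a ≠ 0) (hb : b ≠ 0) (hn₀ : 0 < n₀) :
    ∃ c X₀ : ℝ, 0 < c ∧ ∀ X : ℝ, X₀ ≤ X → c * Real.sqrt X ≤ ((Mset a b n₀ X).ncard : ℝ) := by
  classical
  set P := (a * b).natAbs with hPdef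
  have hP : 0 < P := Int.natAbs_pos.2 (mul_ne_zero ha hb)
  have hP1 : (1 : ℝ) ≤ P := by exact_mod_cast hP
  set C : ℝ := 16 * (n₀ : ℝ) * Real.sqrt ((a.natAbs : ℝ) ^ 3 * (b.natAbs : ℝ) ^ 3) with hC
  have hC0 : 0 < C := by
    have h1 : (0 : ℝ) < a.natAbs := Nat.cast_pos.2 (Int.natAbs_pos.2 ha)
    have h2 : (0 : ℝ) < b.natAbs := Nat.cast_pos.2 (Int.natAbs_pos.2 hb)
    have h3 : (0 : ℝ) < n₀ := Int.cast_pos.2 hn₀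
    positivity
  -- The threshold is `Y ≥ (24 P)²`, so that the error `√Y + O(1)` is absorbed by `Y / (8 P)`.
  refine ⟨1 / (8 * P * C), ((24 * P) ^ 2 * C) ^ 2, by positivity, fun X hX => ?_⟩
  set Y := Real.sqrt X / C with hY
  have hYlow : (24 * (P : ℝ)) ^ 2 ≤ Y := by
    rw [hY, le_div_iff₀ hC0]
    exact Real.le_sqrt_of_sq_le hX
  have hY0 : 0 ≤ Y := by positivity
  set N := Nat.floor (Y / P) with hN
  have hN1 : Y / P < N + 1 := Nat.lt_floor_add_one _
  have hN2 : P * (N : ℝ) ≤ Y := by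
    have : (N : ℝ) ≤ Y / P := Nat.floor_le (by positivity)
    rw [le_div_iff₀ (by positivity)] at this
    linarith
  have hsub : (((Finset.range N).filter fun k => Squarefree (1 + P * k)).image
      fun k => 1 + P * k : Set ℕ) ⊆ Mset a b n₀ X := by
    intro m hm
    obtain ⟨k, hk, rfl⟩ := Finset.mem_image.1 (Finset.mem_coe.1 hm)
    obtain ⟨hkN, hsq⟩ := Finset.mem_filter.1 hk
    refine ⟨hsq, by omega, by simp [← hPdef], ?_⟩
    have h1 : 1 + P * k ≤ P * N := by
      have := Finset.mem_range.1 hkN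
      nlinarith
    exact le_trans (by exact_mod_cast h1) hN2
  have hinj : Function.Injective fun k => 1 + P * k := fun x y hxy => by
    simpa [hP.ne'] using hxy
  have hcard := Set.ncard_le_ncard hsub (Mset_finite a b n₀ X)
  rw [Set.ncard_coe_finset, Finset.card_image_of_injective _ hinj] at hcard
  have hcount := count_squarefree hP N
  have hcard' : ((((Finset.range N).filter fun k => Squarefree (1 + P * k)).card : ℕ) : ℝ) ≤
      ((Mset a b n₀ X).ncard : ℝ) := by exact_mod_cast hcard
  have hs : (Nat.sqrt (P * N) : ℝ) ≤ Real.sqrt Y :=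
    Real.nat_sqrt_le_real_sqrt.trans (Real.sqrt_le_sqrt (by push_cast; exact hN2))
  have hsY : 24 * (P : ℝ) ≤ Real.sqrt Y := Real.le_sqrt_of_sq_le hYlow
  have hYP : 3 * Real.sqrt Y ≤ Y / (8 * P) := by
    rw [le_div_iff₀ (by positivity)]
    nlinarith [Real.mul_self_sqrt hY0, Real.sqrt_nonneg Y]
  have e1 : 1 / (8 * P * C) * Real.sqrt X = Y / (8 * P) := by
    rw [hY]; field_simp
  have e2 : Y / P = 8 * (Y / (8 * P)) := by field_simp
  rw [e1]
  linarith

/-- Hermite's theorem for subfields of the algebraic closure. -/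
lemma finite_absDisc (X : ℝ) :
    {K : IntermediateField ℚ Qbar | FiniteDimensional ℚ K ∧ (absDisc K : ℝ) ≤ X}.Finite := by
  have := (NumberField.finite_of_discr_bdd Qbar (Nat.floor X)).image Subtype.val
  refine this.subset ?_
  rintro K ⟨hK, hX⟩
  refine ⟨⟨K, hK⟩, ?_, rfl⟩
  have h1 : absDisc K = (@NumberField.discr K _ (@NumberField.mk _ _ inferInstance hK)).natAbs :=
    dif_pos hK
  have h2 : absDisc K ≤ Nat.floor X := Nat.le_floor hX
  rw [h1] at h2
  change |@NumberField.discr K _ (@NumberField.mk _ _ inferInstance hK)| ≤ _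
  rw [Int.abs_eq_natAbs]
  exact_mod_cast h2

/-- Proposition 3.5 (3): `|T_a(a,b;X)| ≫_{a,b} X^{1/2}`, and
consequently `|𝓕_{4,a}(a,b;X)| ≫_{a,b} X^{1/2}`. -/
theorem Tset_lower_bound
    (a b : ℤ) (ha : Squarefree a) (hb : Squarefree b) (hab : a ≠ b)
    (ha0 : a ≠ 0) (ha1 : a ≠ 1) (hb0 : b ≠ 0) (hb1 : b ≠ 1)
    (sa sb : Qbar) (hsa : sa ^ 2 = (a : Qbar)) (hsb : sb ^ 2 = (b : Qbar))
    (hne : (F4a sa sb).Nonempty)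
    (g₀ h₀ n₀ : ℤ) (hg₀ : 0 ≤ g₀) (hh₀ : 0 < h₀) (hn₀ : 0 < n₀)
    (heq : g₀ ^ 2 - h₀ ^ 2 * a = n₀ ^ 2 * b) :
    ∃ c X₀ : ℝ, 0 < c ∧ ∀ X : ℝ, X₀ ≤ X →
      c * Real.sqrt X ≤ ((Tset sa a b g₀ h₀ n₀ X).ncard : ℝ) ∧
      c * Real.sqrt X ≤
        (({K ∈ F4a sa sb | (absDisc K : ℝ) ≤ X}).ncard : ℝ) := by
  obtain ⟨c, X₀, hc, hcX⟩ := le_Mset_ncard ha0 hb0 hn₀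
  -- a square root of `m (g₀ + h₀ √a)` for each `m`
  have hroot : ∀ m : ℕ, ∃ t : Qbar,
      t ^ 2 = ((g₀ * m : ℤ) : Qbar) + ((h₀ * m : ℤ) : Qbar) * sa := fun m =>
    IsAlgClosed.exists_pow_nat_eq _ two_pos
  choose t ht using hroot
  refine ⟨c, X₀, hc, fun X hX => ?_⟩
  have hsub : Tset sa a b g₀ h₀ n₀ X ⊆ {K ∈ F4a sa sb | (absDisc K : ℝ) ≤ X} := by
    rintro K ⟨m, ⟨-, hm0, -, hm⟩, u, hu, rfl⟩
    obtain ⟨R, S, f⟩ :=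
      (rad_of ha hb hab ha1 hb1 hsa hsb hh₀ hn₀ heq hm0 hu).exists_frame
    exact ⟨f.mem_F4a, bound_le ha0 hb0 hn₀ hm0 hm f.absDisc_le⟩
  have hfin : {K ∈ F4a sa sb | (absDisc K : ℝ) ≤ X}.Finite :=
    (finite_absDisc X).subset fun K hK =>
      ⟨Module.finite_of_finrank_eq_succ hK.1.1.1.1, hK.2⟩
  have hinj : Set.InjOn (fun m => adjoin ℚ {t m}) (Mset a b n₀ X) := by
    rintro m₁ ⟨hs₁, hp₁, hc₁, -⟩ m₂ ⟨hs₂, -, hc₂, -⟩ hK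
    exact injective_aux hs₁ hs₂ hc₁ hc₂ ha ha1
      (rad_of ha hb hab ha1 hb1 hsa hsb hh₀ hn₀ heq hp₁ (ht m₁)) rfl (ht m₂)
      (by rw [show adjoin ℚ {t m₁} = adjoin ℚ {t m₂} from hK]; exact mem_adjoin_simple_self ℚ _)
  have himg : (fun m => adjoin ℚ {t m}) '' Mset a b n₀ X ⊆ Tset sa a b g₀ h₀ n₀ X := by
    rintro _ ⟨m, hm, rfl⟩
    exact ⟨m, hm, t m, ht m, rfl⟩
  have h1 : (Mset a b n₀ X).ncard ≤ (Tset sa a b g₀ h₀ n₀ X).ncard := by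
    rw [← hinj.ncard_image]
    exact Set.ncard_le_ncard himg (hfin.subset hsub)
  have h2 := Set.ncard_le_ncard hsub hfin
  have h0 := hcX X hX
  have h3 : c * Real.sqrt X ≤ ((Tset sa a b g₀ h₀ n₀ X).ncard : ℝ) :=
    h0.trans (by exact_mod_cast h1)
  exact ⟨h3, h3.trans (by exact_mod_cast h2)⟩
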